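/- arXiv:2602.12762 — 3 statements merged into one kernel-verified Lean document; each statement's English description precedes it below -/
import Mathlib

section
/- Let R be a commutative unital ℂ-algebra of finite dimension n as a ℂ-vector space. Then the two Koszul flattenings of the structure tensor of R, namely the linear map K^{A,B} : Λ²R ⊗ R → R ⊗ R defined by (a ∧ a') ⊗ b ↦ a ⊗ (a'b) − a' ⊗ (ab), and the linear map K^{A,C} : Λ²R ⊗ R* → R ⊗ R* defined by (a ∧ a') ⊗ γ ↦ a ⊗ γ(a'·) − a' ⊗ γ(a·), both have rank exactly n(n−1). -/
/-!
Both flattenings are instances of one construction. Let `P : V → End W` be a linear map with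
commuting values such that some `e : V` acts on `W` as the identity (here `V = R`, `e = 1`, and
`W` is `R` or its dual, regarded as an `R`-module). Then
`Λ²V ⊗ W → V ⊗ W → W → 0`, whose second arrow is the action `v ⊗ w ↦ P v w`, is exact:
the composite vanishes because the operators `P v` commute, and conversely
`x - e ⊗ (lift P) x` lies in the image of the gadget for every `x : V ⊗ W`, since on `x = v ⊗ w`
it is the image of `(v ∧ e) ⊗ w`. The action is surjective because of `e`, so rank-nullity gives
rank `dim V * dim W - dim W`.
-/

set_option synthInstance.maxHeartbeats 1000000
set_option maxHeartbeats 2000000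

open TensorProduct

noncomputable section

namespace KKF

/-- The linear map on the `n`-th exterior power induced by an alternating map. -/
def extLift {M N : Type} [AddCommGroup M] [Module ℂ M] [AddCommGroup N] [Module ℂ N]
    (n : ℕ) (f : M [⋀^Fin n]→ₗ[ℂ] N) : (⋀[ℂ]^n M) →ₗ[ℂ] N :=
  (ExteriorAlgebra.liftAlternating
    (Function.update (fun i => (0 : M [⋀^Fin i]→ₗ[ℂ] N)) n f)).comp (Submodule.subtype _)

variable {V U W X Y N : Type} [AddCommGroup V] [Module ℂ V] [AddCommGroup U] [Module ℂ U]
  [AddCommGroup W] [Module ℂ W] [AddCommGroup X] [Module ℂ X] [AddCommGroup Y] [Module ℂ Y]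
  [AddCommGroup N] [Module ℂ N]

/-- A bilinear map `V → V → N`, as a multilinear map on `Fin 2 → V`. -/
def multi2ₗ : (V →ₗ[ℂ] V →ₗ[ℂ] N) →ₗ[ℂ] MultilinearMap ℂ (fun _ : Fin 2 => V) N :=
  ((multilinearCurryLeftEquiv (R := ℂ) (M := fun _ : Fin 2 => V) (M₂ := N)).symm.toLinearMap).comp
    (LinearMap.llcomp ℂ V (V →ₗ[ℂ] N) (MultilinearMap ℂ (fun _ : Fin 1 => V) N)
      (MultilinearMap.ofSubsingletonₗ ℂ ℂ V N (0 : Fin 1)).toLinearMap)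

/-- A trilinear map `V → V → V → N`, as a multilinear map on `Fin 3 → V`. -/
def multi3 (f : V →ₗ[ℂ] V →ₗ[ℂ] V →ₗ[ℂ] N) : MultilinearMap ℂ (fun _ : Fin 3 => V) N :=
  LinearMap.uncurryLeft (M := fun _ : Fin 3 => V) (multi2ₗ.comp f)

/-- The trilinear map `(v₁, v₂, v₃) ↦ v₁ ⊗ v₂ ⊗ v₃`, in curried form. -/
def tmul3 : V →ₗ[ℂ] V →ₗ[ℂ] V →ₗ[ℂ] (V ⊗[ℂ] (V ⊗[ℂ] V)) :=
  (LinearMap.lcomp ℂ (V →ₗ[ℂ] (V ⊗[ℂ] (V ⊗[ℂ] V))) (TensorProduct.mk ℂ V V)).comp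
    ((LinearMap.llcomp ℂ V (V ⊗[ℂ] V) (V ⊗[ℂ] (V ⊗[ℂ] V))).comp
      (TensorProduct.mk ℂ V (V ⊗[ℂ] V)))

/-- The antisymmetrizer `Λ²V → V ⊗ V`, `v ∧ v' ↦ v ⊗ v' − v' ⊗ v`. -/
def antisym2 : (⋀[ℂ]^2 V) →ₗ[ℂ] (V ⊗[ℂ] V) :=
  extLift 2 (MultilinearMap.alternatization (multi2ₗ (TensorProduct.mk ℂ V V)))

/-- The antisymmetrizer `Λ³V → V ⊗ V ⊗ V`,
`v₁ ∧ v₂ ∧ v₃ ↦ Σ_{σ ∈ S₃} sgn σ • v_{σ(1)} ⊗ v_{σ(2)} ⊗ v_{σ(3)}`. -/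
def antisym3 : (⋀[ℂ]^3 V) →ₗ[ℂ] (V ⊗[ℂ] (V ⊗[ℂ] V)) :=
  extLift 3 (MultilinearMap.alternatization (multi3 tmul3))

/-- The Koszul flattening gadget: from a bilinear pairing `P`, the linear map
`Λ²V ⊗ W → V ⊗ X`, `(v ∧ v') ⊗ w ↦ v ⊗ P v' w − v' ⊗ P v w`. -/
def koszulGadget (P : V →ₗ[ℂ] W →ₗ[ℂ] X) :
    ((⋀[ℂ]^2 V) ⊗[ℂ] W) →ₗ[ℂ] (V ⊗[ℂ] X) :=
  (LinearMap.lTensor V (TensorProduct.lift P)).comp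
    (((TensorProduct.assoc ℂ V V W).toLinearMap).comp
      (LinearMap.rTensor W (antisym2 (V := V))))

/-- The rank of a linear map: the dimension of its image. -/
def rank {M N : Type} [AddCommGroup M] [Module ℂ M] [AddCommGroup N] [Module ℂ N]
    (f : M →ₗ[ℂ] N) : ℕ :=
  Module.finrank ℂ (LinearMap.range f)

/-- For a commutative `ℂ`-algebra `R`, the bilinear map `R → R* → R*`,
`(a, γ) ↦ γ(a·)`, i.e. the contraction of the structure tensor of `R` giving `T(a, γ) ∈ R*`. -/
def mulDual (R : Type) [CommRing R] [Algebra ℂ R] :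
    R →ₗ[ℂ] Module.Dual ℂ R →ₗ[ℂ] Module.Dual ℂ R :=
  (Module.Dual.transpose (R := ℂ)).comp (LinearMap.mul ℂ R)


theorem antisym2_ιMulti (m : Fin 2 → V) :
    antisym2 (exteriorPower.ιMulti ℂ 2 m) = m 0 ⊗ₜ[ℂ] m 1 - m 1 ⊗ₜ[ℂ] m 0 := by
  have h : antisym2 (exteriorPower.ιMulti ℂ 2 m) =
      MultilinearMap.alternatization (multi2ₗ (TensorProduct.mk ℂ V V)) m := by
    simp only [antisym2, extLift, LinearMap.comp_apply, Submodule.subtype_apply,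
      exteriorPower.ιMulti_apply_coe, ExteriorAlgebra.liftAlternating_apply_ιMulti,
      Function.update_self]
  have h2 (k : Fin 2 → V) : multi2ₗ (TensorProduct.mk ℂ V V) k = k 0 ⊗ₜ[ℂ] k 1 := rfl
  rw [h, MultilinearMap.alternatization_apply, Finset.univ_perm_fin_succ]
  simp [MultilinearMap.domDomCongr_apply, h2, sub_eq_add_neg,
    Finset.sum_map, ← Finset.univ_product_univ]

theorem koszulGadget_ιMulti_tmul (P : V →ₗ[ℂ] W →ₗ[ℂ] X) (m : Fin 2 → V) (w : W) :
    koszulGadget P (exteriorPower.ιMulti ℂ 2 m ⊗ₜ[ℂ] w) =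
      m 0 ⊗ₜ[ℂ] P (m 1) w - m 1 ⊗ₜ[ℂ] P (m 0) w := by
  simp [koszulGadget, antisym2_ιMulti, TensorProduct.sub_tmul]

/-- Exactness of `Λ²V ⊗ W → V ⊗ W → W` for a commuting family of operators containing the
identity. -/
theorem range_koszulGadget (P : V →ₗ[ℂ] W →ₗ[ℂ] W)
    (hP : ∀ a b w, P a (P b w) = P b (P a w)) (e : V) (he : ∀ w, P e w = w) :
    LinearMap.range (koszulGadget P) = LinearMap.ker (TensorProduct.lift P) := by
  apply le_antisymm
  · rw [LinearMap.range_le_ker_iff]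
    ext m w
    simp [koszulGadget_ιMulti_tmul, hP (m 0) (m 1)]
  · have key (x : V ⊗[ℂ] W) :
        x - e ⊗ₜ[ℂ] TensorProduct.lift P x ∈ LinearMap.range (koszulGadget P) := by
      induction x with
      | zero => simp
      | tmul v w =>
        refine ⟨exteriorPower.ιMulti ℂ 2 ![v, e] ⊗ₜ[ℂ] w, ?_⟩
        simp [koszulGadget_ιMulti_tmul, he]
      | add x y hx hy =>
        rw [map_add, TensorProduct.tmul_add, add_sub_add_comm]
        exact add_mem hx hy
    intro x hx
    have := key x
    rwa [LinearMap.mem_ker.mp hx, TensorProduct.tmul_zero, sub_zero] at this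

theorem finrank_range_koszulGadget [FiniteDimensional ℂ V] [FiniteDimensional ℂ W]
    (P : V →ₗ[ℂ] W →ₗ[ℂ] W)
    (hP : ∀ a b w, P a (P b w) = P b (P a w)) (e : V) (he : ∀ w, P e w = w) :
    Module.finrank ℂ (LinearMap.range (koszulGadget P)) =
      Module.finrank ℂ V * Module.finrank ℂ W - Module.finrank ℂ W := by
  have hsurj : Function.Surjective (TensorProduct.lift P) := fun w => ⟨e ⊗ₜ[ℂ] w, by simp [he]⟩
  have := LinearMap.finrank_range_add_finrank_ker (TensorProduct.lift P)
  rw [LinearMap.range_eq_top.mpr hsurj, finrank_top, Module.finrank_tensorProduct] at this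
  rw [range_koszulGadget P hP e he]
  omega

/-- For an `n`-dimensional commutative unital `ℂ`-algebra `R`, the two Koszul flattenings
of the structure tensor of `R`, namely `K^{A,B} : Λ²R ⊗ R → R ⊗ R`,
`(a ∧ a') ⊗ b ↦ a ⊗ (a'b) − a' ⊗ (ab)`, and `K^{A,C} : Λ²R ⊗ R* → R ⊗ R*`,
`(a ∧ a') ⊗ γ ↦ a ⊗ γ(a'·) − a' ⊗ γ(a·)`, both have rank exactly `n(n−1)`. -/
theorem statement6 (R : Type) [CommRing R] [Algebra ℂ R] [FiniteDimensional ℂ R]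
    (n : ℕ) (hn : Module.finrank ℂ R = n) :
    Module.finrank ℂ (LinearMap.range (koszulGadget (LinearMap.mul ℂ R))) = n * (n - 1) ∧
    Module.finrank ℂ (LinearMap.range (koszulGadget (mulDual R))) = n * (n - 1) := by
  subst hn
  refine ⟨?_, ?_⟩
  · rw [finrank_range_koszulGadget _ (fun a b w => mul_left_comm a b w) 1 (fun w => one_mul w),
      Nat.mul_sub_one]
  · have happ (a x : R) (γ : Module.Dual ℂ R) : mulDual R a γ x = γ (a * x) := rfl
    rw [finrank_range_koszulGadget (mulDual R)
      (fun a b γ => LinearMap.ext fun x => by simp only [happ, mul_left_comm]) 1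
      (fun γ => LinearMap.ext fun x => by rw [happ, one_mul]),
      Subspace.dual_finrank_eq, Nat.mul_sub_one]

end KKF
end
end

section
/- Let d ≥ 1. For all symmetric matrices V, W ∈ Mat_{d×d}(ℂ), the commutator VW − WV has rank at most 2⌊d/2⌋, and there exist symmetric matrices V, W ∈ Mat_{d×d}(ℂ) for which the rank of VW − WV equals exactly 2⌊d/2⌋. -/
/-!
The commutator of two symmetric matrices is skew-symmetric. In odd dimension a skew-symmetric
matrix has determinant `0` (`det A = det Aᵀ = det (-A) = -det A`), hence rank at most
`d - 1 = 2⌊d/2⌋`; in even dimension the bound is the trivial one, `d`.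

For sharpness, take `V = diag(0, 1, …, d - 1)` and `W` the matrix of the reversal
`i ↦ d - 1 - i`. Then `(VW - WV) i j = (i - j) W i j`, so up to a permutation of the columns the
commutator is the diagonal matrix with entries `i - (d - 1 - i)`. These vanish only at a fixed point
of the reversal, that is, nowhere for even `d` and exactly at the middle index for odd `d`.
-/

set_option synthInstance.maxHeartbeats 1000000
set_option maxHeartbeats 2000000

open TensorProduct

noncomputable section

namespace KKF

/-- A skew-symmetric matrix of odd size is singular, so it has rank less than its size. -/
lemma rank_lt_of_skew_of_odd {d : ℕ} (hd : Odd d) (A : Matrix (Fin d) (Fin d) ℂ)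
    (hA : A.transpose = -A) : A.rank < d := by
  have hdet : A.det = 0 := by
    have h : A.det = -A.det := by
      conv_lhs => rw [← Matrix.det_transpose, hA, Matrix.det_neg, Fintype.card_fin, hd.neg_one_pow]
      ring
    exact self_eq_neg.mp h
  refine lt_of_le_of_ne (by simpa using A.rank_le_width) fun h => ?_
  have hu : IsUnit A := by
    rw [← Matrix.linearIndependent_cols_iff_isUnit, linearIndependent_iff_card_eq_finrank_span,
      Set.finrank, ← Matrix.rank_eq_finrank_span_cols, h, Fintype.card_fin]
  exact ((Matrix.isUnit_iff_isUnit_det A).mp hu).ne_zero hdet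

/-- The reversal of `Fin d` moves exactly `2⌊d/2⌋` points. -/
lemma card_ne_rev (d : ℕ) : Fintype.card {i : Fin d // i ≠ i.rev} = 2 * (d / 2) := by
  have hc : Fintype.card {i : Fin d // i = i.rev} = d % 2 := by
    rcases Nat.even_or_odd' d with ⟨k, rfl | rfl⟩
    · rw [Nat.mul_mod_right, Fintype.card_eq_zero_iff]
      refine ⟨fun ⟨i, hi⟩ => ?_⟩
      rw [Fin.ext_iff, Fin.val_rev] at hi
      omega
    · rw [Nat.mul_add_mod, Fintype.card_eq_one_iff]
      refine ⟨⟨⟨k, by omega⟩, ?_⟩, fun ⟨i, hi⟩ => ?_⟩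
      · rw [Fin.ext_iff, Fin.val_rev]
        simp only
        omega
      · rw [Fin.ext_iff, Fin.val_rev] at hi
        simp only [Subtype.mk.injEq, Fin.ext_iff]
        omega
  have h := Fintype.card_subtype_compl (fun i : Fin d => i = i.rev)
  rw [hc, Fintype.card_fin] at h
  simp only [ne_eq]
  omega

/-- For all symmetric `d × d` complex matrices `V`, `W`, the commutator `VW − WV` has
rank at most `2⌊d/2⌋`, and this bound is attained by some pair of symmetric matrices. -/
theorem statement7 (d : ℕ) (hd : 1 ≤ d) :
    (∀ V W : Matrix (Fin d) (Fin d) ℂ, V.IsSymm → W.IsSymm →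
      (V * W - W * V).rank ≤ 2 * (d / 2)) ∧
    ∃ V W : Matrix (Fin d) (Fin d) ℂ, V.IsSymm ∧ W.IsSymm ∧
      (V * W - W * V).rank = 2 * (d / 2) := by
  refine ⟨fun V W hV hW => ?_, ?_⟩
  · rcases Nat.even_or_odd d with he | ho
    · rw [Nat.two_mul_div_two_of_even he]
      exact Matrix.rank_le_width _
    · have h := rank_lt_of_skew_of_odd ho (V * W - W * V) (by
        rw [Matrix.transpose_sub, Matrix.transpose_mul, Matrix.transpose_mul, hV.eq, hW.eq,
          neg_sub])
      have := Nat.two_mul_div_two_add_one_of_odd ho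
      omega
  · refine ⟨Matrix.diagonal fun i => ((i : ℕ) : ℂ),
      Matrix.of fun i j => if i = j.rev then 1 else 0, Matrix.isSymm_diagonal _, ?_, ?_⟩
    · ext i j
      simp only [Matrix.transpose_apply, Matrix.of_apply]
      congr 1
      rw [eq_iff_iff, ← Fin.rev_eq_iff, eq_comm]
    · have hC : (Matrix.diagonal fun i : Fin d => ((i : ℕ) : ℂ)) *
            (Matrix.of fun i j => if i = j.rev then 1 else 0) -
            (Matrix.of fun i j => if i = j.rev then 1 else 0) *
              (Matrix.diagonal fun i : Fin d => ((i : ℕ) : ℂ)) =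
          (Matrix.diagonal fun i : Fin d => ((i : ℕ) : ℂ) - ((i.rev : ℕ) : ℂ)).submatrix
            (Equiv.refl _) Fin.revPerm := by
        ext i j
        rw [Matrix.sub_apply, Matrix.diagonal_mul, Matrix.mul_diagonal, Matrix.submatrix_apply,
          Matrix.diagonal_apply, Matrix.of_apply]
        simp only [Equiv.refl_apply, Fin.revPerm_apply]
        split_ifs with h
        · rw [h, Fin.rev_rev]
          ring
        · ring
      rw [hC, Matrix.rank_submatrix, Matrix.rank_diagonal, ← card_ne_rev d]
      refine Fintype.card_congr (Equiv.subtypeEquivRight fun i => ?_)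
      rw [sub_ne_zero, ne_eq, ne_eq, Nat.cast_inj, Fin.ext_iff]

end KKF
end
end

section
/- The 2×2 matrix multiplication tensor M₂ = Σ_{i,j,k∈{0,1}} e_{(i,j)} ⊗ e_{(j,k)} ⊗ e_{(k,i)} ∈ ℂ⁴ ⊗ ℂ⁴ ⊗ ℂ⁴ has rank at most 7, i.e., there exist vectors u₁,…,u₇, v₁,…,v₇, w₁,…,w₇ ∈ ℂ⁴ such that M₂ = Σ_{l=1}^7 u_l ⊗ v_l ⊗ w_l. -/
/-!
Strassen's identity. For `A = (a_{ij})` and `B = (b_{jk})`, the entries of `C = A * B` are the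
combinations

* `c₀₀ = m₁ + m₄ - m₅ + m₇`, `c₀₁ = m₃ + m₅`, `c₁₀ = m₂ + m₄`, `c₁₁ = m₁ - m₂ + m₃ + m₆`

of the seven products
`m₁ = (a₀₀ + a₁₁)(b₀₀ + b₁₁)`, `m₂ = (a₁₀ + a₁₁) b₀₀`, `m₃ = a₀₀ (b₀₁ - b₁₁)`,
`m₄ = a₁₁ (b₁₀ - b₀₀)`, `m₅ = (a₀₀ + a₀₁) b₁₁`, `m₆ = (a₁₀ - a₀₀)(b₀₀ + b₀₁)`,
`m₇ = (a₀₁ - a₁₁)(b₁₀ + b₁₁)`.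
The two factors of `m_l` give `u_l` and `v_l`. The coefficient of `m_l` in `c_{ik}` is the
coefficient of `e_{(k,i)}` in `w_l`; the indices are swapped because the third factor of the
tensor is `e_{(k,i)}`. Equality of the tensors then follows from multilinearity alone.
-/

set_option synthInstance.maxHeartbeats 1000000
set_option maxHeartbeats 2000000

open TensorProduct

noncomputable section

namespace KKF

/-- `ℂ⁴`, with coordinates indexed by pairs from `{0,1}`. -/
abbrev C4 : Type := (Fin 2 × Fin 2) → ℂ

/-- The standard basis vector `e_{(i,j)}` of `ℂ⁴`. -/
def e (p : Fin 2 × Fin 2) : C4 := Pi.single p 1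

/-- The 2×2 matrix multiplication tensor
`M₂ = Σ_{i,j,k} e_{(i,j)} ⊗ e_{(j,k)} ⊗ e_{(k,i)}`. -/
def M2 : C4 ⊗[ℂ] (C4 ⊗[ℂ] C4) :=
  ∑ i : Fin 2, ∑ j : Fin 2, ∑ k : Fin 2, e (i, j) ⊗ₜ[ℂ] (e (j, k) ⊗ₜ[ℂ] e (k, i))

/-- The 2×2 matrix multiplication tensor has rank at most 7. -/
theorem statement12 :
    ∃ (u v w : Fin 7 → C4), M2 = ∑ l : Fin 7, u l ⊗ₜ[ℂ] (v l ⊗ₜ[ℂ] w l) := by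
  refine ⟨
    ![e (0, 0) + e (1, 1), e (1, 0) + e (1, 1), e (0, 0), e (1, 1), e (0, 0) + e (0, 1),
      e (1, 0) - e (0, 0), e (0, 1) - e (1, 1)],
    ![e (0, 0) + e (1, 1), e (0, 0), e (0, 1) - e (1, 1), e (1, 0) - e (0, 0), e (1, 1),
      e (0, 0) + e (0, 1), e (1, 0) + e (1, 1)],
    ![e (0, 0) + e (1, 1), e (0, 1) - e (1, 1), e (1, 0) + e (1, 1), e (0, 0) + e (0, 1),
      e (1, 0) - e (0, 0), e (1, 1), e (0, 0)], ?_⟩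
  simp only [M2, Fin.sum_univ_succ, Fin.sum_univ_zero, Matrix.cons_val_zero,
    Matrix.cons_val_succ, Fin.succ_zero_eq_one, Fin.isValue, add_zero,
    TensorProduct.tmul_add, TensorProduct.add_tmul, TensorProduct.tmul_sub,
    TensorProduct.sub_tmul]
  abel

end KKF
end
end
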